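/- Let A and B be RLTs whose roots a and b are both Bag nodes, with children subtrees A₁, …, A_m and B₁, …, B_n respectively, and let N = max(m, n). Define the N × N matrix Δ by Δ_{ij} = d(A_i, B_j) for 1 ≤ i ≤ m and 1 ≤ j ≤ n, Δ_{ij} = d(A_i, Λ) for 1 ≤ i ≤ m and n < j ≤ N, and Δ_{ij} = d(Λ, B_j) for m < i ≤ N and 1 ≤ j ≤ n. Then the edit distance satisfies d(A, B) = min over all permutations σ of {1, …, N} of Σ_{i=1}^{N} Δ_{i, σ(i)}. -/

import Mathlib

/- Formalization framework for "Tree edit distance for hierarchical data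
compatible with HMIL paradigm".

Rooted labeled trees (RLTs): `Value` leaves carry a label `l : L` with data type
`τ l : DT`; `Bag` nodes have an unordered finite collection of children
(represented by a `List` together with free, zero-cost permutation edit steps,
which realizes the multiset semantics); `Object` nodes have children indexed by
pairwise distinct string edge-labels (an association list with `Nodup` keys,
again with free reordering since it represents a finite map).  The empty tree Λ
is represented by `none : OTree L`. -/

namespace TED

inductive PreRLT (L : Type) : Type where
  | value : L → PreRLT L
  | bag   : List (PreRLT L) → PreRLT L
  | obj   : List (String × PreRLT L) → PreRLT L

namespace PreRLT

variable {L DT : Type}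

/-- Node types ν: Value, Bag, Object. -/
inductive NT : Type where
  | value | bag | obj
deriving DecidableEq

/-- The kind of a node: its node type together with its label (Bag and Object
nodes implicitly carry the null label). -/
inductive NodeKind (L : Type) : Type where
  | value : L → NodeKind L
  | bag : NodeKind L
  | obj : NodeKind L

def nt : PreRLT L → NT
  | .value _ => .value
  | .bag _ => .bag
  | .obj _ => .obj

def kind : PreRLT L → NodeKind L
  | .value l => .value l
  | .bag _ => .bag
  | .obj _ => .obj

def children : PreRLT L → List (PreRLT L)
  | .value _ => []
  | .bag cs => cs
  | .obj cs => cs.map Prod.snd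

/-- A leaf is a node with no children (a Value node, an empty Bag or an empty
Object). -/
def IsLeaf (t : PreRLT L) : Prop := t.children = []

/-- Well-formedness: the edge labels of every Object node are pairwise
distinct. -/
inductive WF : PreRLT L → Prop where
  | value (l : L) : WF (.value l)
  | bag {cs : List (PreRLT L)} : (∀ c ∈ cs, WF c) → WF (.bag cs)
  | obj {cs : List (String × PreRLT L)} :
      (cs.map Prod.fst).Nodup → (∀ p ∈ cs, WF p.2) → WF (.obj cs)

end PreRLT

open PreRLT

/-- Possibly empty rooted labeled tree; `none` is the empty tree Λ. -/
abbrev OTree (L : Type) := Option (PreRLT L)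

def WFO {L : Type} : OTree L → Prop
  | none => True
  | some t => t.WF

/-- The cost function γ.  `rel l l'` is the cost of relabeling a Value node
(used only when `τ l = τ l'`), and `del k` is the cost γ(v, λ) of deleting a
node of kind `k`; insertion cost γ(λ, v) equals the deletion cost γ(v, λ).
γ is a metric on labels of equal data type. -/
structure Cost (L DT : Type) (τ : L → DT) where
  rel : L → L → ℝ
  del : PreRLT.NodeKind L → ℝ
  del_nonneg : ∀ k, 0 ≤ del k
  rel_self : ∀ l, rel l l = 0
  rel_indisc : ∀ l l', τ l = τ l' → rel l l' = 0 → l = l'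
  rel_symm : ∀ l l', rel l l' = rel l' l
  rel_triangle : ∀ l₁ l₂ l₃, τ l₁ = τ l₂ → τ l₂ = τ l₃ →
      rel l₁ l₃ ≤ rel l₁ l₂ + rel l₂ l₃

variable {L DT : Type} {τ : L → DT}

/-- Schema-preserving edit steps on nonempty trees: relabel a Value node to a
label of the same data type, delete a leaf, insert a leaf (at an Object node
only with a fresh edge label).  The `bagPerm`/`objPerm` steps are invisible,
zero-cost reorderings of the list representation of the unordered children
collections. -/
inductive Estep (τ : L → DT) : PreRLT L → PreRLT L → Type where
  | relabel (l l' : L) (h : τ l = τ l') : Estep τ (.value l) (.value l')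
  | bagPerm (cs : List (PreRLT L)) (σ : Equiv.Perm (Fin cs.length)) :
      Estep τ (.bag cs) (.bag (List.ofFn fun i => cs.get (σ i)))
  | objPerm (cs : List (String × PreRLT L)) (σ : Equiv.Perm (Fin cs.length)) :
      Estep τ (.obj cs) (.obj (List.ofFn fun i => cs.get (σ i)))
  | bagCongr (pre post : List (PreRLT L)) {t t' : PreRLT L} (e : Estep τ t t') :
      Estep τ (.bag (pre ++ t :: post)) (.bag (pre ++ t' :: post))
  | objCongr (pre post : List (String × PreRLT L)) (k : String) {t t' : PreRLT L}
      (e : Estep τ t t') :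
      Estep τ (.obj (pre ++ (k, t) :: post)) (.obj (pre ++ (k, t') :: post))
  | bagDel (cs : List (PreRLT L)) (t : PreRLT L) (h : t.IsLeaf) :
      Estep τ (.bag (t :: cs)) (.bag cs)
  | bagIns (cs : List (PreRLT L)) (t : PreRLT L) (h : t.IsLeaf) :
      Estep τ (.bag cs) (.bag (t :: cs))
  | objDel (cs : List (String × PreRLT L)) (k : String) (t : PreRLT L) (h : t.IsLeaf) :
      Estep τ (.obj ((k, t) :: cs)) (.obj cs)
  | objIns (cs : List (String × PreRLT L)) (k : String) (t : PreRLT L) (h : t.IsLeaf)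
      (hk : k ∉ cs.map Prod.fst) :
      Estep τ (.obj cs) (.obj ((k, t) :: cs))

/-- Cost of a single edit step. -/
def Estep.cost (C : Cost L DT τ) : {t t' : PreRLT L} → Estep τ t t' → ℝ
  | _, _, .relabel l l' _ => C.rel l l'
  | _, _, .bagPerm _ _ => 0
  | _, _, .objPerm _ _ => 0
  | _, _, .bagCongr _ _ e => e.cost C
  | _, _, .objCongr _ _ _ e => e.cost C
  | _, _, .bagDel _ t _ => C.del t.kind
  | _, _, .bagIns _ t _ => C.del t.kind
  | _, _, .objDel _ _ t _ => C.del t.kind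
  | _, _, .objIns _ _ t _ _ => C.del t.kind

/-- Edit steps on possibly empty trees: the root leaf may be deleted, and a
root leaf may be inserted into the empty tree. -/
inductive EstepO (τ : L → DT) : OTree L → OTree L → Type where
  | inner {t t' : PreRLT L} (e : Estep τ t t') : EstepO τ (some t) (some t')
  | delRoot (t : PreRLT L) (h : t.IsLeaf) : EstepO τ (some t) none
  | insRoot (t : PreRLT L) (h : t.IsLeaf) : EstepO τ none (some t)

def EstepO.cost (C : Cost L DT τ) : {T T' : OTree L} → EstepO τ T T' → ℝ
  | _, _, .inner e => e.cost C
  | _, _, .delRoot t _ => C.del t.kind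
  | _, _, .insRoot t _ => C.del t.kind

/-- An edit sequence S = s₁ ∘ ⋯ ∘ s_k transforming one tree into another. -/
inductive Eseq (τ : L → DT) : OTree L → OTree L → Type where
  | nil (T : OTree L) : Eseq τ T T
  | cons {T T' T'' : OTree L} (s : EstepO τ T T') (S : Eseq τ T' T'') : Eseq τ T T''

/-- γ(S), the total cost of an edit sequence. -/
def Eseq.cost (C : Cost L DT τ) : {T T' : OTree L} → Eseq τ T T' → ℝ
  | _, _, .nil _ => 0
  | _, _, .cons s S => s.cost C + S.cost C

/-- The tree edit distance d(T, T'): the minimum of γ(S) over all edit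
sequences S transforming T into T'. -/
noncomputable def editDist (C : Cost L DT τ) (T T' : OTree L) : ℝ :=
  sInf {c : ℝ | ∃ S : Eseq τ T T', S.cost C = c}

end TED
namespace TED

open PreRLT

variable {L DT : Type} {τ : L → DT}

/-- Addresses of nodes in a tree: a child of a Bag node is addressed by its
position, a child of an Object node by its edge label. -/
inductive Pstep : Type where
  | idx : ℕ → Pstep
  | key : String → Pstep
deriving DecidableEq

abbrev Path := List Pstep

/-- The subtree rooted at the node addressed by a path, if it exists. -/
def subAt : Path → PreRLT L → Option (PreRLT L)
  | [], t => some t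
  | .idx n :: p, .bag cs => cs[n]?.bind (subAt p)
  | .key k :: p, .obj cs => (List.lookup k cs).bind (subAt p)
  | _, _ => none

def subAtO (T : OTree L) (p : Path) : Option (PreRLT L) :=
  T.bind (fun t => subAt p t)

/-- `p` addresses a node of `T`. -/
def IsNode (T : OTree L) (p : Path) : Prop := (subAtO T p).isSome

/-- Two nodes have the same node type and, for Value nodes, the same data
type. -/
def SameTypePair (τ : L → DT) (t₁ t₂ : PreRLT L) : Prop :=
  t₁.nt = t₂.nt ∧ ∀ l₁ l₂, t₁ = .value l₁ → t₂ = .value l₂ → τ l₁ = τ l₂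

/-- `q` addresses a (proper) descendant of the node addressed by `p`. -/
def IsDesc (p q : Path) : Prop := p <+: q ∧ q ≠ p

/-- An edit distance mapping (M, T₁, T₂). -/
structure IsMapping (τ : L → DT) (T₁ T₂ : OTree L) (M : Set (Path × Path)) : Prop where
  /-- pairs consist of a node of T₁ and a node of T₂ -/
  nodes : ∀ pq ∈ M, IsNode T₁ pq.1 ∧ IsNode T₂ pq.2
  /-- paired nodes have the same node type and, for Value nodes, data type -/
  types : ∀ pq ∈ M, ∃ t₁ t₂, subAtO T₁ pq.1 = some t₁ ∧ subAtO T₂ pq.2 = some t₂ ∧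
      SameTypePair τ t₁ t₂
  /-- the mapping is one-to-one -/
  one_to_one : ∀ pq ∈ M, ∀ pq' ∈ M, ((pq : Path × Path).1 = (pq' : Path × Path).1 ↔
      (pq : Path × Path).2 = (pq' : Path × Path).2)
  /-- parents of non-root paired nodes are paired as well -/
  parents : ∀ pq ∈ M, (pq : Path × Path).1 ≠ [] → (pq : Path × Path).2 ≠ [] →
      ((pq : Path × Path).1.dropLast, (pq : Path × Path).2.dropLast) ∈ M
  /-- if (v, w) ∉ M then no descendant of v is paired with a descendant of w -/
  desc : ∀ p q, (p, q) ∉ M → ∀ p' q', IsDesc p p' → IsDesc q q' → (p', q') ∉ M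
  /-- paired children of Object nodes are connected by equally labeled edges -/
  edge : ∀ pq ∈ M, ∀ t : PreRLT L, (pq : Path × Path).1 ≠ [] →
      subAtO T₁ (pq : Path × Path).1.dropLast = some t → t.nt = .obj →
      (pq : Path × Path).1.getLast? = (pq : Path × Path).2.getLast?

/-- γ(v → w) for a pair of mapped nodes: the relabeling cost for Value nodes,
and 0 for the (null-labeled) inner nodes. -/
noncomputable def pairCost (C : Cost L DT τ) (T₁ T₂ : OTree L) (p q : Path) : ℝ :=
  match subAtO T₁ p, subAtO T₂ q with
  | some (.value l₁), some (.value l₂) => C.rel l₁ l₂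
  | _, _ => 0

/-- γ(v, λ), the deletion (= insertion) cost of the node of `T` at `p`. -/
noncomputable def delCost (C : Cost L DT τ) (T : OTree L) (p : Path) : ℝ :=
  match subAtO T p with
  | some t => C.del t.kind
  | none => 0

/-- γ(M) = Σ_{(v,w)∈M} γ(v,w) + Σ_{v∈N₁} γ(v,λ) + Σ_{w∈N₂} γ(λ,w), where N₁, N₂
are the nodes of T₁, T₂ not occurring in M. -/
noncomputable def mapCost (C : Cost L DT τ) (T₁ T₂ : OTree L)
    (M : Set (Path × Path)) : ℝ :=
  (∑ᶠ pq ∈ M, pairCost C T₁ T₂ (pq : Path × Path).1 (pq : Path × Path).2)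
    + (∑ᶠ p ∈ {p : Path | IsNode T₁ p ∧ ∀ q, (p, q) ∉ M}, delCost C T₁ p)
    + (∑ᶠ q ∈ {q : Path | IsNode T₂ q ∧ ∀ p, (p, q) ∉ M}, delCost C T₂ q)

/-- How a single edit step moves node addresses: `e.pmap p = some q` iff the
node at `p` persists through `e` (possibly relabeled) as the node at `q`. -/
def Estep.pmap : {t t' : PreRLT L} → Estep τ t t' → Path → Option Path
  | _, _, .relabel _ _ _, [] => some []
  | _, _, .relabel _ _ _, _ :: _ => none
  | _, _, .bagPerm _ _, [] => some []
  | _, _, .bagPerm cs σ, .idx i :: p =>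
      if h : i < cs.length then some (.idx (σ.symm ⟨i, h⟩).val :: p) else none
  | _, _, .bagPerm _ _, .key _ :: _ => none
  | _, _, .objPerm _ _, [] => some []
  | _, _, .objPerm _ _, .key k :: p => some (.key k :: p)
  | _, _, .objPerm _ _, .idx _ :: _ => none
  | _, _, .bagCongr _ _ _, [] => some []
  | _, _, .bagCongr pre _ e, .idx i :: p =>
      if i = pre.length then (e.pmap p).map (fun q => .idx i :: q)
      else some (.idx i :: p)
  | _, _, .bagCongr _ _ _, .key _ :: _ => none
  | _, _, .objCongr _ _ _ _, [] => some []
  | _, _, .objCongr _ _ k e, .key k' :: p =>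
      if k' = k then (e.pmap p).map (fun q => .key k :: q)
      else some (.key k' :: p)
  | _, _, .objCongr _ _ _ _, .idx _ :: _ => none
  | _, _, .bagDel _ _ _, [] => some []
  | _, _, .bagDel _ _ _, .idx 0 :: _ => none
  | _, _, .bagDel _ _ _, .idx (i + 1) :: p => some (.idx i :: p)
  | _, _, .bagDel _ _ _, .key _ :: _ => none
  | _, _, .bagIns _ _ _, [] => some []
  | _, _, .bagIns _ _ _, .idx i :: p => some (.idx (i + 1) :: p)
  | _, _, .bagIns _ _ _, .key _ :: _ => none
  | _, _, .objDel _ k _ _, [] => some []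
  | _, _, .objDel _ k _ _, .key k' :: p =>
      if k' = k then none else some (.key k' :: p)
  | _, _, .objDel _ _ _ _, .idx _ :: _ => none
  | _, _, .objIns _ k _ _ _, [] => some []
  | _, _, .objIns _ k _ _ _, .key k' :: p =>
      if k' = k then none else some (.key k' :: p)
  | _, _, .objIns _ _ _ _ _, .idx _ :: _ => none

def EstepO.pmap : {T T' : OTree L} → EstepO τ T T' → Path → Option Path
  | _, _, .inner e => e.pmap
  | _, _, .delRoot _ _ => fun _ => none
  | _, _, .insRoot _ _ => fun _ => none

/-- How an edit sequence moves node addresses, by composition. -/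
def Eseq.pmap : {T T' : OTree L} → Eseq τ T T' → Path → Option Path
  | _, _, .nil _ => fun p => some p
  | _, _, .cons s S => fun p => (s.pmap p).bind S.pmap

/-- The mapping (M, T₁, T₂) induced by an edit sequence S : T₁ → T₂, pairing
each node of T₁ that persists (possibly relabeled) through S with its image in
T₂. -/
def Eseq.induced {T₁ T₂ : OTree L} (S : Eseq τ T₁ T₂) : Set (Path × Path) :=
  {pq | IsNode T₁ pq.1 ∧ S.pmap pq.1 = some pq.2}

/-- The sum Σ_v γ(v, λ) of the deletion (equivalently, insertion) costs over
all nodes of a tree. -/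
noncomputable def delSum (C : Cost L DT τ) : PreRLT L → ℝ
  | .value l => C.del (.value l)
  | .bag cs => C.del .bag + (cs.attach.map (fun c => delSum C c.1)).sum
  | .obj cs => C.del .obj + (cs.attach.map (fun c => delSum C c.1.2)).sum
  termination_by t => sizeOf t
  decreasing_by
  · have := List.sizeOf_lt_of_mem c.2
    simp only [PreRLT.bag.sizeOf_spec]
    omega
  · have h1 := List.sizeOf_lt_of_mem c.2
    have h2 : sizeOf c.1.2 < sizeOf c.1 := by
      obtain ⟨a, b⟩ := c.1
      simp [Prod.mk.sizeOf_spec]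
    simp only [PreRLT.obj.sizeOf_spec]
    omega

/-- Equality of trees under the multiset semantics of Bag children and the
finite-map semantics of Object children. -/
inductive TEquiv : PreRLT L → PreRLT L → Prop where
  | value (l : L) : TEquiv (.value l) (.value l)
  | bag {cs cs' : List (PreRLT L)} (l : List (PreRLT L × PreRLT L))
      (h₁ : l.map Prod.fst = cs) (h₂ : (l.map Prod.snd).Perm cs')
      (h₃ : ∀ pq ∈ l, TEquiv pq.1 pq.2) :
      TEquiv (.bag cs) (.bag cs')
  | obj {cs cs' : List (String × PreRLT L)}
      (l : List ((String × PreRLT L) × (String × PreRLT L)))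
      (h₁ : l.map Prod.fst = cs) (h₂ : (l.map Prod.snd).Perm cs')
      (hk : ∀ pq ∈ l, pq.1.1 = pq.2.1)
      (h₃ : ∀ pq ∈ l, TEquiv pq.1.2 pq.2.2) :
      TEquiv (.obj cs) (.obj cs')

/-- Equality of possibly empty trees under the multiset semantics. -/
def OEquiv : OTree L → OTree L → Prop
  | none, none => True
  | some t, some t' => TEquiv t t'
  | _, _ => False

end TED


namespace TED

open PreRLT

section Helpers

variable {L DT : Type} {τ : L → DT}

/-- Two functions on a finite type with the same multiset of values differ by a permutation. -/
theorem exists_perm_of_map_eq {ι β : Type} [Fintype ι] (f g : ι → β)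
    (h : (Finset.univ : Finset ι).val.map f = (Finset.univ : Finset ι).val.map g) :
    ∃ e : Equiv.Perm ι, ∀ i, f i = g (e i) := by
  classical
  have hc : ∀ b : β, Nonempty ({i // f i = b} ≃ {i // g i = b}) := by
    intro b
    refine ⟨Fintype.equivOfCardEq ?_⟩
    have h1 := congrArg (Multiset.count b) h
    rw [Multiset.count_map, Multiset.count_map] at h1
    rw [Fintype.card_subtype, Fintype.card_subtype]
    simp only [Finset.card, Finset.filter_val]
    simpa [eq_comm] using h1
  refine ⟨Equiv.ofFiberEquiv (f := f) (g := g) (fun b => (hc b).some), fun i => ?_⟩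
  exact (Equiv.ofFiberEquiv_map (f := f) (g := g) (fun b => (hc b).some) i).symm

theorem univ_map_get {α : Type} (l : List α) :
    (Finset.univ : Finset (Fin l.length)).val.map l.get = (l : Multiset α) := by
  rw [Fin.univ_val_map, List.ofFn_get]

/-- A list permutation is realised by a permutation of the index set. -/
theorem exists_perm_ofFn {α : Type} {l l' : List α} (h : l.Perm l') :
    ∃ σ : Equiv.Perm (Fin l.length), (List.ofFn fun i => l.get (σ i)) = l' := by
  have hl : l.length = l'.length := h.length_eq
  have h2 : (Finset.univ : Finset (Fin l.length)).val.map (fun i => l'.get (Fin.cast hl i))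
      = (Finset.univ : Finset (Fin l.length)).val.map l.get := by
    rw [univ_map_get, Multiset.coe_eq_coe.2 h, Fin.univ_val_map]
    congr 1
    apply List.ext_get
    · simp [hl]
    · intro n h1 h2
      simp
  obtain ⟨e, he⟩ := exists_perm_of_map_eq _ _ h2
  refine ⟨e, ?_⟩
  apply List.ext_get
  · simp [hl]
  · intro n h1 h2
    have := he ⟨n, by simpa using h1⟩
    simp at this ⊢
    exact this.symm

theorem rel_nonneg (C : Cost L DT τ) (l l' : L) (h : τ l = τ l') : 0 ≤ C.rel l l' := by
  have h1 := C.rel_triangle l l' l h h.symm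
  rw [C.rel_self, C.rel_symm l' l] at h1
  linarith

theorem Estep.cost_nonneg (C : Cost L DT τ) {t t' : PreRLT L} (e : Estep τ t t') :
    0 ≤ e.cost C := by
  induction e with
  | relabel l l' h => exact rel_nonneg C l l' h
  | bagPerm => simp [Estep.cost]
  | objPerm => simp [Estep.cost]
  | bagCongr _ _ e ih => simpa [Estep.cost] using ih
  | objCongr _ _ _ e ih => simpa [Estep.cost] using ih
  | bagDel => exact C.del_nonneg _
  | bagIns => exact C.del_nonneg _
  | objDel => exact C.del_nonneg _
  | objIns => exact C.del_nonneg _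

theorem EstepO.cost_nonneg (C : Cost L DT τ) {T T' : OTree L} (e : EstepO τ T T') :
    0 ≤ e.cost C := by
  cases e with
  | inner e => exact e.cost_nonneg C
  | delRoot => exact C.del_nonneg _
  | insRoot => exact C.del_nonneg _

theorem Eseq.cost_nonneg (C : Cost L DT τ) {T T' : OTree L} (S : Eseq τ T T') :
    0 ≤ S.cost C := by
  induction S with
  | nil => simp [Eseq.cost]
  | cons s S ih =>
    have := s.cost_nonneg C
    simp only [Eseq.cost]
    linarith

/-- `T'` can be reached from `T` with total cost `c`. -/
def Reach (C : Cost L DT τ) (T T' : OTree L) (c : ℝ) : Prop :=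
  ∃ S : Eseq τ T T', S.cost C = c

theorem Reach.refl (C : Cost L DT τ) (T : OTree L) : Reach C T T 0 := ⟨.nil T, rfl⟩

theorem Reach.head {C : Cost L DT τ} {T T' T'' : OTree L} {c : ℝ} (s : EstepO τ T T')
    (h : Reach C T' T'' c) : Reach C T T'' (s.cost C + c) := by
  obtain ⟨S, rfl⟩ := h
  exact ⟨.cons s S, rfl⟩

theorem Reach.single {C : Cost L DT τ} {T T' : OTree L} (s : EstepO τ T T') :
    Reach C T T' (s.cost C) := by
  simpa using Reach.head s (Reach.refl C T')

theorem Reach.trans {C : Cost L DT τ} {T T' T'' : OTree L} {c c' : ℝ}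
    (h : Reach C T T' c) (h' : Reach C T' T'' c') : Reach C T T'' (c + c') := by
  obtain ⟨S, rfl⟩ := h
  induction S with
  | nil => simpa [Eseq.cost] using h'
  | cons s S ih =>
    have := Reach.head s (ih h')
    simpa [Eseq.cost, add_assoc] using this

theorem dist_le {C : Cost L DT τ} {T T' : OTree L} {c : ℝ} (h : Reach C T T' c) :
    editDist C T T' ≤ c := by
  refine csInf_le ⟨0, ?_⟩ h
  rintro x ⟨S, rfl⟩
  exact S.cost_nonneg C

theorem exists_lt_dist {C : Cost L DT τ} {T T' : OTree L} (h : ∃ c, Reach C T T' c)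
    {ε : ℝ} (hε : 0 < ε) : ∃ c, Reach C T T' c ∧ c < editDist C T T' + ε := by
  have := exists_lt_of_csInf_lt (s := {c : ℝ | ∃ S : Eseq τ T T', S.cost C = c}) h
    (b := editDist C T T' + ε) (by unfold editDist; linarith)
  obtain ⟨c, hc, hlt⟩ := this
  exact ⟨c, hc, hlt⟩

theorem dist_triangle {C : Cost L DT τ} {T T' T'' : OTree L} (h : ∃ c, Reach C T T' c)
    (h' : ∃ c, Reach C T' T'' c) :
    editDist C T T'' ≤ editDist C T T' + editDist C T' T'' := by
  refine le_of_forall_pos_le_add fun ε hε => ?_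
  obtain ⟨c, hc, hlt⟩ := exists_lt_dist h (half_pos hε)
  obtain ⟨c', hc', hlt'⟩ := exists_lt_dist h' (half_pos hε)
  have := dist_le (hc.trans hc')
  linarith

theorem dist_self_le (C : Cost L DT τ) (T : OTree L) : editDist C T T ≤ 0 :=
  dist_le (Reach.refl C T)

theorem dist_step {C : Cost L DT τ} {T T' T'' : OTree L} (s : EstepO τ T T')
    (h' : ∃ c, Reach C T' T'' c) :
    editDist C T T'' ≤ s.cost C + editDist C T' T'' := by
  have h1 := dist_triangle ⟨_, Reach.single (C := C) s⟩ h'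
  have h2 := dist_le (Reach.single (C := C) s)
  linarith

/-! Connectivity. -/

/-- Reachability by inner steps. -/
def Inner (τ : L → DT) : PreRLT L → PreRLT L → Prop :=
  Relation.ReflTransGen fun t t' => Nonempty (Estep τ t t')

theorem Inner.reach (C : Cost L DT τ) {t t' : PreRLT L} (h : Inner τ t t') :
    ∃ c, Reach C (some t) (some t') c := by
  induction h with
  | refl => exact ⟨0, Reach.refl C _⟩
  | tail _ e ih =>
    obtain ⟨c, hc⟩ := ih
    obtain ⟨e⟩ := e
    exact ⟨_, hc.trans (Reach.single (.inner e))⟩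

theorem Inner.bag {t t' : PreRLT L} (cs : List (PreRLT L)) (h : Inner τ t t') :
    Inner τ (.bag (t :: cs)) (.bag (t' :: cs)) := by
  induction h with
  | refl => exact Relation.ReflTransGen.refl
  | tail _ e ih => exact ih.tail (e.map fun e => Estep.bagCongr [] cs e)

theorem Inner.obj {t t' : PreRLT L} (k : String) (cs : List (String × PreRLT L))
    (h : Inner τ t t') :
    Inner τ (.obj ((k, t) :: cs)) (.obj ((k, t') :: cs)) := by
  induction h with
  | refl => exact Relation.ReflTransGen.refl
  | tail _ e ih => exact ih.tail (e.map fun e => Estep.objCongr [] cs k e)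

theorem Inner.bag_nil (τ : L → DT) (cs : List (PreRLT L))
    (h : ∀ c ∈ cs, ∃ t' : PreRLT L, t'.IsLeaf ∧ Inner τ c t') :
    Inner τ (.bag cs) (.bag []) := by
  induction cs with
  | nil => exact Relation.ReflTransGen.refl
  | cons c cs ih =>
    obtain ⟨t', hl, hi⟩ := h c (by simp)
    exact ((hi.bag cs).tail ⟨Estep.bagDel cs t' hl⟩).trans
      (ih fun c hc => h c (by simp [hc]))

theorem Inner.obj_nil (τ : L → DT) (cs : List (String × PreRLT L))
    (h : ∀ c ∈ cs, ∃ t' : PreRLT L, t'.IsLeaf ∧ Inner τ c.2 t') :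
    Inner τ (.obj cs) (.obj []) := by
  induction cs with
  | nil => exact Relation.ReflTransGen.refl
  | cons c cs ih =>
    obtain ⟨k, c⟩ := c
    obtain ⟨t', hl, hi⟩ := h (k, c) (by simp)
    exact ((hi.obj k cs).tail ⟨Estep.objDel cs k t' hl⟩).trans
      (ih fun c hc => h c (by simp [hc]))

theorem Inner.to_leaf (τ : L → DT) : (t : PreRLT L) → ∃ t' : PreRLT L, t'.IsLeaf ∧ Inner τ t t'
  | .value l => ⟨.value l, rfl, Relation.ReflTransGen.refl⟩
  | .bag cs => ⟨.bag [], rfl, Inner.bag_nil τ cs fun c _ => Inner.to_leaf τ c⟩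
  | .obj cs => ⟨.obj [], rfl, Inner.obj_nil τ cs fun c _ => Inner.to_leaf τ c.2⟩
  termination_by t => sizeOf t
  decreasing_by
  · have := List.sizeOf_lt_of_mem ‹c ∈ cs›
    simp only [PreRLT.bag.sizeOf_spec]
    omega
  · have h1 := List.sizeOf_lt_of_mem ‹c ∈ cs›
    have h2 : sizeOf c.2 < sizeOf c := by
      obtain ⟨a, b⟩ := c
      simp [Prod.mk.sizeOf_spec]
    simp only [PreRLT.obj.sizeOf_spec]
    omega

theorem Inner.nil_bag (τ : L → DT) (cs : List (PreRLT L))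
    (h : ∀ c ∈ cs, ∃ t' : PreRLT L, t'.IsLeaf ∧ Inner τ t' c) :
    Inner τ (.bag []) (.bag cs) := by
  induction cs with
  | nil => exact Relation.ReflTransGen.refl
  | cons c cs ih =>
    obtain ⟨t', hl, hi⟩ := h c (by simp)
    exact ((ih fun c hc => h c (by simp [hc])).tail ⟨Estep.bagIns cs t' hl⟩).trans (hi.bag cs)

theorem Inner.nil_obj (τ : L → DT) (cs : List (String × PreRLT L))
    (hn : (cs.map Prod.fst).Nodup)
    (h : ∀ c ∈ cs, ∃ t' : PreRLT L, t'.IsLeaf ∧ Inner τ t' c.2) :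
    Inner τ (.obj []) (.obj cs) := by
  induction cs with
  | nil => exact Relation.ReflTransGen.refl
  | cons c cs ih =>
    obtain ⟨k, c⟩ := c
    obtain ⟨t', hl, hi⟩ := h (k, c) (by simp)
    rw [List.map_cons, List.nodup_cons] at hn
    exact ((ih hn.2 fun c hc => h c (by simp [hc])).tail
      ⟨Estep.objIns cs k t' hl hn.1⟩).trans (hi.obj k cs)

theorem Inner.of_leaf (τ : L → DT) {t : PreRLT L} (ht : t.WF) :
    ∃ t' : PreRLT L, t'.IsLeaf ∧ Inner τ t' t := by
  induction ht with
  | value l => exact ⟨.value l, rfl, Relation.ReflTransGen.refl⟩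
  | bag _ ih => exact ⟨.bag [], rfl, Inner.nil_bag τ _ ih⟩
  | obj hn _ ih => exact ⟨.obj [], rfl, Inner.nil_obj τ _ hn ih⟩

theorem reach_none (C : Cost L DT τ) (T : OTree L) : ∃ c, Reach C T none c := by
  cases T with
  | none => exact ⟨0, Reach.refl C _⟩
  | some t =>
    obtain ⟨t', hl, hi⟩ := Inner.to_leaf τ t
    obtain ⟨c, hc⟩ := hi.reach C
    exact ⟨_, hc.trans (Reach.single (.delRoot t' hl))⟩

theorem reach_of_none (C : Cost L DT τ) {T : OTree L} (h : WFO T) : ∃ c, Reach C none T c := by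
  cases T with
  | none => exact ⟨0, Reach.refl C _⟩
  | some t =>
    obtain ⟨t', hl, hi⟩ := Inner.of_leaf τ (t := t) h
    obtain ⟨c, hc⟩ := hi.reach C
    exact ⟨_, (Reach.single (.insRoot t' hl)).trans hc⟩

theorem reach_all (C : Cost L DT τ) (T : OTree L) {T' : OTree L} (h : WFO T') :
    ∃ c, Reach C T T' c := by
  obtain ⟨c, hc⟩ := reach_none C T
  obtain ⟨c', hc'⟩ := reach_of_none C h
  exact ⟨_, hc.trans hc'⟩

/-! Upper bound. -/

theorem Reach.perm (C : Cost L DT τ) {cs cs' : List (PreRLT L)} (h : cs.Perm cs') :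
    Reach C (some (.bag cs)) (some (.bag cs')) 0 := by
  obtain ⟨σ, rfl⟩ := exists_perm_ofFn h
  exact Reach.single (C := C) (.inner (Estep.bagPerm cs σ))

theorem Reach.lift {C : Cost L DT τ} {x y : OTree L} {c : ℝ} (post : List (PreRLT L))
    (h : Reach C x y c) :
    Reach C (some (.bag (x.toList ++ post))) (some (.bag (y.toList ++ post))) c := by
  obtain ⟨S, rfl⟩ := h
  induction S with
  | nil => exact Reach.refl C _
  | cons s S ih =>
    refine Reach.trans ?_ ih
    cases s with
    | inner e => exact Reach.single (C := C) (.inner (Estep.bagCongr [] post e))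
    | delRoot t h => exact Reach.single (C := C) (.inner (Estep.bagDel post t h))
    | insRoot t h => exact Reach.single (C := C) (.inner (Estep.bagIns post t h))

theorem Reach.bags {C : Cost L DT τ} (l : List (OTree L × OTree L)) (f : OTree L × OTree L → ℝ)
    (h : ∀ p ∈ l, Reach C p.1 p.2 (f p)) :
    ∀ post : List (PreRLT L), Reach C (some (.bag ((l.map Prod.fst).reduceOption ++ post)))
      (some (.bag ((l.map Prod.snd).reduceOption ++ post))) (l.map f).sum := by
  induction l with
  | nil => intro post; exact Reach.refl C _
  | cons p l ih =>
    intro post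
    obtain ⟨x, y⟩ := p
    have key : ∀ (x : OTree L) (l : List (OTree L)),
        (x :: l).reduceOption = x.toList ++ l.reduceOption := by
      intro x l; cases x <;> simp
    simp only [List.map_cons, key, List.sum_cons, List.append_assoc]
    refine (Reach.lift _ (h (x, y) (by simp))).trans ?_
    have hp : ∀ l : List (PreRLT L), (y.toList ++ (l ++ post)).Perm (l ++ (y.toList ++ post)) :=
      fun l => by
        rw [← List.append_assoc, ← List.append_assoc]
        exact List.perm_append_comm.append_right _
    have h3 := ((Reach.perm C (hp _)).trans
      (ih (fun p hp => h p (by simp [hp])) (y.toList ++ post))).trans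
      (Reach.perm C (hp _).symm)
    simpa using h3

theorem reduceOption_ofFn {α : Type} (l : List α) (N : ℕ) (h : l.length ≤ N) :
    (List.ofFn fun i : Fin N => l[(i : ℕ)]?) = l.map some ++ List.replicate (N - l.length) none := by
  apply List.ext_getElem?
  intro n
  rw [List.getElem?_ofFn, List.getElem?_append, List.getElem?_replicate]
  simp only [List.length_map, List.getElem?_map]
  split_ifs with h1 h2 h3 h4
  · simp [List.getElem?_eq_getElem h2]
  · simp [List.getElem?_eq_none (not_lt.1 h2)]
  · omega
  · omega
  · omega
  · rfl

theorem dist_le_sum (C : Cost L DT τ) (as bs : List (PreRLT L)) (hB : (PreRLT.bag bs).WF)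
    (N : ℕ) (ha : as.length ≤ N) (hb : bs.length ≤ N) (σ : Equiv.Perm (Fin N)) :
    editDist C (some (.bag as)) (some (.bag bs)) ≤
      ∑ i : Fin N, editDist C as[(i : ℕ)]? bs[((σ i : Fin _) : ℕ)]? := by
  refine le_of_forall_pos_le_add fun ε hε => ?_
  have hbs : ∀ b ∈ bs, b.WF := by cases hB; assumption
  set δ : ℝ := ε / (N + 1) with hδ
  have hδ0 : 0 < δ := by positivity
  have hN : N * δ ≤ ε := by
    rw [hδ, mul_div_assoc', div_le_iff₀ (by positivity)]
    nlinarith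
  set l : List (OTree L × OTree L) :=
    List.ofFn fun i : Fin N => (as[(i : ℕ)]?, bs[((σ i : Fin _) : ℕ)]?) with hl
  have hex : ∀ p ∈ l, ∃ c, Reach C p.1 p.2 c ∧ c < editDist C p.1 p.2 + δ := by
    intro p hp
    rw [hl, List.mem_ofFn] at hp
    obtain ⟨i, rfl⟩ := hp
    refine exists_lt_dist (reach_all C _ ?_) hδ0
    cases hq : bs[((σ i : Fin _) : ℕ)]? with
    | none => simp [WFO]
    | some b => exact hbs b (List.mem_of_getElem? hq)
  choose! f hf hf' using hex
  have hR := Reach.bags l f hf []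
  have e1 : (l.map Prod.fst).reduceOption = as := by
    have : l.map Prod.fst = List.ofFn fun i : Fin N => as[(i : ℕ)]? := by
      rw [hl, List.map_ofFn]; rfl
    rw [this, reduceOption_ofFn _ _ ha]
    simp [List.reduceOption]
  have e2 : ((l.map Prod.snd).reduceOption).Perm bs := by
    have h1 : l.map Prod.snd = List.ofFn ((fun i : Fin N => bs[(i : ℕ)]?) ∘ σ) := by
      rw [hl, List.map_ofFn]; rfl
    have h2 : (l.map Prod.snd).Perm (List.ofFn (fun i : Fin N => bs[(i : ℕ)]?)) := by
      rw [h1]; exact Equiv.Perm.ofFn_comp_perm σ _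
    have h3 := h2.filterMap id
    rw [reduceOption_ofFn _ _ hb] at h3
    simpa [List.reduceOption] using h3
  rw [e1, List.append_nil, List.append_nil] at hR
  have h4 := dist_le (hR.trans (Reach.perm C e2))
  have h5 : (l.map f).sum ≤ ∑ i : Fin N,
      (editDist C as[(i : ℕ)]? bs[((σ i : Fin _) : ℕ)]? + δ) := by
    have : (l.map f).sum = ∑ i : Fin N, f (as[(i : ℕ)]?, bs[((σ i : Fin _) : ℕ)]?) := by
      rw [hl, List.map_ofFn, List.sum_ofFn]; rfl
    rw [this]
    refine Finset.sum_le_sum fun i _ => (hf' _ ?_).le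
    rw [hl, List.mem_ofFn]
    exact ⟨i, rfl⟩
  rw [Finset.sum_add_distrib] at h5
  simp only [Finset.sum_const, Finset.card_univ, Fintype.card_fin, nsmul_eq_mul] at h5
  linarith

/-! Lower bound. -/

/-- There is a partial matching of `as` with `bs` of cost at most `c`, padded by `p` and `q` empty
trees. -/
def Matching (C : Cost L DT τ) (as bs : List (PreRLT L)) (c : ℝ) (p q : ℕ) : Prop :=
  ∃ M : Multiset (OTree L × OTree L),
    M.map Prod.fst = ((as.map some : List (OTree L)) : Multiset (OTree L)) + Multiset.replicate p none ∧
    M.map Prod.snd = ((bs.map some : List (OTree L)) : Multiset (OTree L)) + Multiset.replicate q none ∧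
    (M.map fun x => editDist C x.1 x.2).sum ≤ c

theorem wfo_of_mem {bs : List (PreRLT L)} (hbs : ∀ b ∈ bs, b.WF) {q : ℕ} {y : OTree L}
    (hy : y ∈ ((bs.map some : List (OTree L)) : Multiset (OTree L)) + Multiset.replicate q none) :
    WFO y := by
  cases y with
  | none => trivial
  | some b =>
    simp [Multiset.mem_replicate] at hy
    exact hbs b hy

/-- Replace the partner of one tree in a matching. -/
theorem matching_replace (C : Cost L DT τ) {as bs : List (PreRLT L)} {c : ℝ} {p q : ℕ}
    (hbs : ∀ b ∈ bs, b.WF)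
    (x x' : OTree L) (R : Multiset (OTree L))
    (as' : List (PreRLT L)) (p' : ℕ) (δ : ℝ)
    (hR : ((as.map some : List (OTree L)) : Multiset (OTree L)) + Multiset.replicate p none
      = x ::ₘ R)
    (hR' : ((as'.map some : List (OTree L)) : Multiset (OTree L)) + Multiset.replicate p' none
      = x' ::ₘ R)
    (hd : ∀ y, WFO y → editDist C x' y ≤ δ + editDist C x y)
    (h : Matching C as bs c p q) : Matching C as' bs (δ + c) p' q := by
  obtain ⟨M, h1, h2, h3⟩ := h
  rw [hR] at h1
  have hx : x ∈ M.map Prod.fst := by rw [h1]; simp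
  obtain ⟨⟨x0, y⟩, hm, hxy⟩ := Multiset.mem_map.1 hx
  simp only at hxy
  subst hxy
  obtain ⟨M', rfl⟩ := Multiset.exists_cons_of_mem hm
  have hy : WFO y := by
    refine wfo_of_mem hbs (q := q) ?_
    rw [← h2]; simp
  rw [Multiset.map_cons, Multiset.cons_inj_right] at h1
  refine ⟨(x', y) ::ₘ M', ?_, ?_, ?_⟩
  · rw [Multiset.map_cons, h1, hR']
  · rw [← h2]; simp
  · have := hd y hy
    simp only [Multiset.map_cons, Multiset.sum_cons] at h3 ⊢
    linarith

/-- The children of a bag, and nothing otherwise. -/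
def bagChildren : OTree L → List (PreRLT L)
  | some (.bag cs) => cs
  | _ => []

theorem matching_mono {C : Cost L DT τ} {as bs : List (PreRLT L)} {c c' : ℝ} {p q : ℕ}
    (h : Matching C as bs c p q) (hc : c ≤ c') : Matching C as bs c' p q := by
  obtain ⟨M, h1, h2, h3⟩ := h
  exact ⟨M, h1, h2, h3.trans hc⟩

theorem matching_step (C : Cost L DT τ) {bs : List (PreRLT L)} (hbs : ∀ b ∈ bs, b.WF)
    {T T' : OTree L} (s : EstepO τ T T') {c : ℝ}
    (h : ∃ p q, Matching C (bagChildren T') bs c p q) :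
    ∃ p q, Matching C (bagChildren T) bs (s.cost C + c) p q := by
  obtain ⟨p, q, h⟩ := h
  have hs := s.cost_nonneg C
  have triv : bagChildren T = bagChildren T' →
      ∃ p q, Matching C (bagChildren T) bs (s.cost C + c) p q := by
    intro he
    rw [he]
    exact ⟨p, q, matching_mono h (by linarith)⟩
  cases s with
  | delRoot t ht =>
    apply triv
    cases t with
    | value l => rfl
    | obj cs => rfl
    | bag cs =>
      have hcs : cs = [] := ht
      subst hcs
      rfl
  | insRoot t ht =>
    apply triv
    cases t with
    | value l => rfl
    | obj cs => rfl
    | bag cs =>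
      have hcs : cs = [] := ht
      subst hcs
      rfl
  | inner e =>
    cases e with
    | relabel => exact triv rfl
    | objPerm => exact triv rfl
    | objCongr => exact triv rfl
    | objDel => exact triv rfl
    | objIns => exact triv rfl
    | bagPerm cs σ =>
      refine ⟨p, q, matching_mono ?_ (show c ≤ _ by linarith)⟩
      obtain ⟨M, h1, h2, h3⟩ := h
      refine ⟨M, h1.trans ?_, h2, h3⟩
      congr 1
      simp only [bagChildren]
      rw [Multiset.coe_eq_coe]
      refine List.Perm.map _ ?_
      have := Equiv.Perm.ofFn_comp_perm σ cs.get
      rw [List.ofFn_get] at this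
      exact this
    | bagCongr pre post e =>
      rename_i t t'
      refine ⟨p, q, matching_replace C hbs (some t') (some t)
        ((((pre ++ post).map some : List (OTree L)) : Multiset (OTree L))
          + Multiset.replicate p none) _ p _ ?_ ?_ ?_ h⟩
      · simp only [bagChildren]
        rw [← Multiset.cons_add, Multiset.cons_coe]
        congr 1
        rw [Multiset.coe_eq_coe]
        simp
      · simp only [bagChildren]
        rw [← Multiset.cons_add, Multiset.cons_coe]
        congr 1
        rw [Multiset.coe_eq_coe]
        simp
      · intro y hy
        exact dist_step (.inner e) (reach_all C _ hy)
    | bagDel cs t ht =>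
      obtain ⟨M, h1, h2, h3⟩ := h
      refine ⟨p, q + 1, (some t, none) ::ₘ M, ?_, ?_, ?_⟩
      · rw [Multiset.map_cons, h1]
        simp only [bagChildren, List.map_cons]
        rw [← Multiset.cons_add, Multiset.cons_coe]
      · rw [Multiset.map_cons, h2, Multiset.replicate_succ, Multiset.add_cons]
      · simp only [Multiset.map_cons, Multiset.sum_cons]
        have : editDist C (some t) none ≤ C.del t.kind :=
          dist_le (Reach.single (C := C) (.delRoot t ht))
        have h4 : (EstepO.inner (τ := τ) (Estep.bagDel cs t ht)).cost C = C.del t.kind := rfl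
        linarith
    | bagIns cs t ht =>
      refine ⟨p + 1, q, matching_replace C hbs (some t) none
        (((cs.map some : List (OTree L)) : Multiset (OTree L))
          + Multiset.replicate p none) _ _ _ ?_ ?_ ?_ h⟩
      · simp only [bagChildren, List.map_cons]
        rw [← Multiset.cons_add, Multiset.cons_coe]
      · simp only [bagChildren]
        rw [Multiset.replicate_succ, Multiset.add_cons]
      · intro y hy
        exact dist_step (C := C) (.insRoot t ht) (reach_all C _ hy)

theorem matching_seq (C : Cost L DT τ) {bs : List (PreRLT L)} (hbs : ∀ b ∈ bs, b.WF)
    {T T' : OTree L} (S : Eseq τ T T') (hT : T' = some (.bag bs)) :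
    ∃ p q, Matching C (bagChildren T) bs (S.cost C) p q := by
  induction S with
  | nil T =>
    subst hT
    refine ⟨0, 0, ((bs.map fun b => (some b, some b) : List (OTree L × OTree L)) :
      Multiset (OTree L × OTree L)), ?_, ?_, ?_⟩
    · simp [bagChildren]
      exact List.Perm.refl _
    · simp
      exact List.Perm.refl _
    · simp only [Eseq.cost]
      simp only [Multiset.map_coe, List.map_map, Multiset.sum_coe]
      clear hbs
      induction bs with
      | nil => simp
      | cons b bs ih =>
        have h0 := dist_self_le C (some b)
        simp only [List.map_cons, List.sum_cons, Function.comp] at ih ⊢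
        linarith
  | cons s S ih => exact matching_step C hbs s (ih hT)

theorem matching_shrink (C : Cost L DT τ) {as bs : List (PreRLT L)} (hbs : ∀ b ∈ bs, b.WF)
    {c : ℝ} {p q : ℕ} (h : Matching C as bs c (p + 1) (q + 1)) : Matching C as bs c p q := by
  obtain ⟨M, h1, h2, h3⟩ := h
  rw [Multiset.replicate_succ, Multiset.add_cons] at h1 h2
  have hx : none ∈ M.map Prod.fst := by rw [h1]; simp
  obtain ⟨⟨x0, y⟩, hm, hxy⟩ := Multiset.mem_map.1 hx
  simp only at hxy
  subst hxy
  obtain ⟨M', rfl⟩ := Multiset.exists_cons_of_mem hm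
  rw [Multiset.map_cons, Multiset.cons_inj_right] at h1
  rw [Multiset.map_cons] at h2
  simp only [Multiset.map_cons, Multiset.sum_cons] at h3
  cases y with
  | none =>
    rw [Multiset.cons_inj_right] at h2
    refine ⟨M', h1, h2, ?_⟩
    have : 0 ≤ editDist C (none : OTree L) none := by
      refine Real.sInf_nonneg ?_
      rintro x ⟨S, rfl⟩
      exact S.cost_nonneg C
    linarith
  | some b =>
    have hn : none ∈ M'.map Prod.snd := by
      have : none ∈ (some b) ::ₘ M'.map Prod.snd := by rw [h2]; simp
      simpa using this
    obtain ⟨⟨x, y0⟩, hm', hxy⟩ := Multiset.mem_map.1 hn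
    simp only at hxy
    subst hxy
    obtain ⟨M'', rfl⟩ := Multiset.exists_cons_of_mem hm'
    refine ⟨(x, some b) ::ₘ M'', ?_, ?_, ?_⟩
    · rw [← h1]; simp
    · rw [Multiset.map_cons, Multiset.cons_swap, Multiset.cons_inj_right] at h2
      rw [← h2]; simp
    · have hb : WFO (some b) := by
        refine wfo_of_mem hbs (q := q + 1) ?_
        rw [Multiset.replicate_succ, Multiset.add_cons, ← h2]
        simp
      have := dist_triangle (reach_none C x) (reach_of_none C hb)
      simp only [Multiset.map_cons, Multiset.sum_cons] at h3 ⊢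
      linarith

theorem matching_min (C : Cost L DT τ) {as bs : List (PreRLT L)} (hbs : ∀ b ∈ bs, b.WF)
    {c : ℝ} : ∀ {p q : ℕ}, Matching C as bs c p q →
      ∃ p' q', Matching C as bs c p' q' ∧ (p' = 0 ∨ q' = 0)
  | 0, q, h => ⟨0, q, h, Or.inl rfl⟩
  | p + 1, 0, h => ⟨p + 1, 0, h, Or.inr rfl⟩
  | _ + 1, _ + 1, h => matching_min C hbs (matching_shrink C hbs h)

theorem exists_perm_sum_le (C : Cost L DT τ) (as bs : List (PreRLT L)) {c : ℝ} {p q : ℕ}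
    (h : Matching C as bs c p q) (N : ℕ) (ha : as.length + p = N) (hb : bs.length + q = N) :
    ∃ σ : Equiv.Perm (Fin N),
      ∑ i : Fin N, editDist C as[(i : ℕ)]? bs[((σ i : Fin _) : ℕ)]? ≤ c := by
  obtain ⟨M, h1, h2, h3⟩ := h
  have pad : ∀ (l : List (PreRLT L)) (r : ℕ), l.length + r = N →
      (((l.map some : List (OTree L)) : Multiset (OTree L)) + Multiset.replicate r none)
        = (Finset.univ : Finset (Fin N)).val.map fun i : Fin N => l[(i : ℕ)]? := by
    intro l r hr
    rw [Fin.univ_val_map, reduceOption_ofFn l N (by omega), ← Multiset.coe_replicate,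
      Multiset.coe_add]
    congr 3
    omega
  rw [pad as p ha] at h1
  rw [pad bs q hb] at h2
  have hcard : M.card = N := by
    have := congrArg Multiset.card h1
    simpa using this
  obtain ⟨g, rfl⟩ : ∃ g : Fin N → OTree L × OTree L,
      M = (Finset.univ : Finset (Fin N)).val.map g := by
    induction M using Quotient.inductionOn with
    | h l =>
      have hl : l.length = N := by simpa using hcard
      subst hl
      exact ⟨l.get, (univ_map_get l).symm⟩
  rw [Multiset.map_map] at h1 h2 h3
  obtain ⟨e, he⟩ := exists_perm_of_map_eq _ _ h1
  obtain ⟨e', he'⟩ := exists_perm_of_map_eq _ _ h2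
  refine ⟨e.symm.trans e', le_trans (le_of_eq ?_) h3⟩
  change _ = ∑ i : Fin N, editDist C (g i).1 (g i).2
  rw [← Equiv.sum_comp e]
  refine Finset.sum_congr rfl fun i _ => ?_
  have a1 : (g i).1 = as[(e i : ℕ)]? := he i
  have a2 : (g i).2 = bs[(e' i : ℕ)]? := he' i
  rw [a1, a2]
  simp

end Helpers

end TED

/-- for trees A, B whose roots are Bag nodes with children
subtrees A₁, …, A_m and B₁, …, B_n, and N = max(m, n), the edit distance is
the minimum over permutations σ of {1, …, N} of Σᵢ Δ_{i, σ(i)}, where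
Δ_{ij} = d(Aᵢ, Bⱼ) (with Aᵢ = Λ for i > m and Bⱼ = Λ for j > n, as produced by
the out-of-range list lookup `l[i]? = none`). -/
theorem editDist_bag_bag {L DT : Type} (τ : L → DT) (C : TED.Cost L DT τ)
    (as bs : List (TED.PreRLT L))
    (hA : (TED.PreRLT.bag as).WF) (hB : (TED.PreRLT.bag bs).WF) :
    TED.editDist C (some (TED.PreRLT.bag as)) (some (TED.PreRLT.bag bs))
      = ⨅ σ : Equiv.Perm (Fin (max as.length bs.length)),
          ∑ i : Fin (max as.length bs.length),
            TED.editDist C as[(i : ℕ)]? bs[((σ i : Fin _) : ℕ)]? := by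
  have hbs : ∀ b ∈ bs, b.WF := by cases hB; assumption
  apply le_antisymm
  · exact le_ciInf fun σ =>
      TED.dist_le_sum C as bs hB _ (le_max_left _ _) (le_max_right _ _) σ
  · refine le_csInf ?_ ?_
    · exact TED.reach_all C _ (T' := some (TED.PreRLT.bag bs)) hB
    · rintro c ⟨S, rfl⟩
      obtain ⟨p, q, h⟩ := TED.matching_seq C hbs S rfl
      obtain ⟨p', q', h', h0⟩ := TED.matching_min C hbs h
      have hlen : as.length + p' = bs.length + q' := by
        obtain ⟨M, h1, h2, -⟩ := h'
        have e1 := congrArg Multiset.card h1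
        have e2 := congrArg Multiset.card h2
        simp [TED.bagChildren] at e1 e2
        omega
      obtain ⟨σ, hσ⟩ := TED.exists_perm_sum_le C as bs h' (max as.length bs.length)
        (by omega) (by omega)
      exact (ciInf_le (Set.finite_range _).bddBelow σ).trans hσ
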